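/- Let α > 0 and let k_l, k_s, d_l, d_s, γ, T_i, T_∞ be positive constants with ω = √(d_l/d_s), and set h₀* = 2^α Γ(α/2 + 1) k_s T_i d_s^{(α−1)/2} / (T_∞ √π). For each h₀ > h₀*, let ν(h₀) denote the unique x > 0 satisfying equation (24): −(k_s T_i d_s^{(α−1)/2} / (γ d_l^{(α+1)/2})) f₁(x) + (h₀ T_∞ / (γ 2^α d_l^{(α+1)/2})) f₂(x; h₀) = x^{α+1}, and let ν_∞ denote the unique x > 0 satisfying (k_l T_∞ / (2^{α+1} d_l^{α/2+1} γ)) f₃(x) − (k_s T_i d_s^{(α−1)/2} / (γ d_l^{(α+1)/2})) f₁(x) = x^{α+1}. Then ν(h₀) tends to ν_∞ as h₀ → +∞. -/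

import Mathlib

noncomputable def poch (a : ℝ) (s : ℕ) : ℝ := ∏ i ∈ Finset.range s, (a + i)

/-- Kummer's confluent hypergeometric function `M(a,b,z)`,
defined by the everywhere-convergent series `M(a,b,z) = Σ_{s} (a)_s z^s / ((b)_s s!)`. -/
noncomputable def kummerM (a b z : ℝ) : ℝ :=
  ∑' s : ℕ, poch a s / (poch b s * (Nat.factorial s)) * z ^ s

/-- Tricomi's confluent hypergeometric function
`U(a,b,z) = (1/Γ(a)) ∫_0^∞ e^{−z t} t^{a−1} (1+t)^{b−a−1} dt`. -/
noncomputable def tricomiU (a b z : ℝ) : ℝ :=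
  (1 / Real.Gamma a) *
    ∫ t in Set.Ioi (0:ℝ), Real.exp (-z * t) * t ^ (a - 1) * (1 + t) ^ (b - a - 1)

/-!
Write `g(x) = x^(α+1) + A f₁(x)`, `p(x) = M(α/2+1/2, 1/2, x²)`, `q(x) = x M(α/2+1, 3/2, x²)`.
Clearing denominators, equation (24) becomes `g q + (L h₀)⁻¹ g p = B` for constants `L > 0` and `B`,
while the limit equation is `g q = B`. Since `U` decreases and `M` increases in the last argument,
`g q` is strictly increasing and `g p` is nondecreasing on `(0, ∞)`, and both are positive. Hence
`ν(h₀) ≤ ν_∞`, so the perturbation is at most `(L h₀)⁻¹ (g p)(ν_∞)`, which tends to zero. Thus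
`(g q)(ν(h₀)) → (g q)(ν_∞)`, and strict monotonicity of `g q` forces `ν(h₀) → ν_∞`.
-/

open Filter MeasureTheory Set Topology

section MonotoneEquations

lemma tendsto_of_strictMonoOn_of_tendsto_comp {ι X Y : Type*}
    [LinearOrder X] [TopologicalSpace X] [OrderTopology X] [DenselyOrdered X]
    [LinearOrder Y] [TopologicalSpace Y] [OrderClosedTopology Y]
    {l : Filter ι} {s : Set X} {f : X → Y} {u : ι → X} {a : X}
    (hf : StrictMonoOn f s) (hs : s ∈ 𝓝 a) (hu : ∀ᶠ i in l, u i ∈ s)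
    (hfu : Tendsto (fun i => f (u i)) l (𝓝 (f a))) : Tendsto u l (𝓝 a) := by
  have ha : a ∈ s := mem_of_mem_nhds hs
  refine tendsto_order.2 ⟨fun y hy => ?_, fun y hy => ?_⟩
  · obtain ⟨c, hca, hcs⟩ := exists_Ioc_subset_of_mem_nhds hs ⟨y, hy⟩
    obtain ⟨b, hb, hba⟩ := exists_between (max_lt hy hca)
    have hbs : b ∈ s := hcs ⟨(le_max_right y c).trans_lt hb, hba.le⟩
    filter_upwards [hu, hfu.eventually_const_lt (hf hbs ha hba)] with i hi hlt
    exact ((le_max_left y c).trans_lt hb).trans ((hf.lt_iff_lt hbs hi).1 hlt)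
  · obtain ⟨c, hac, hcs⟩ := exists_Ico_subset_of_mem_nhds hs ⟨y, hy⟩
    obtain ⟨b, hab, hb⟩ := exists_between (lt_min hy hac)
    have hbs : b ∈ s := hcs ⟨hab.le, hb.trans_le (min_le_right y c)⟩
    filter_upwards [hu, hfu.eventually_lt_const (hf ha hbs hab)] with i hi hlt
    exact ((hf.lt_iff_lt hi hbs).1 hlt).trans (hb.trans_le (min_le_left y c))

lemma tendsto_of_add_mul_eq {ι : Type*} {l : Filter ι} {s : Set ℝ} {F G : ℝ → ℝ} {u ε : ι → ℝ}
    {a : ℝ} (hF : StrictMonoOn F s) (hG : MonotoneOn G s) (hG_nonneg : ∀ x ∈ s, 0 ≤ G x)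
    (hs : s ∈ 𝓝 a) (hε_nonneg : ∀ᶠ i in l, 0 ≤ ε i) (hε : Tendsto ε l (𝓝 0))
    (hu : ∀ᶠ i in l, u i ∈ s) (heq : ∀ᶠ i in l, F (u i) + ε i * G (u i) = F a) :
    Tendsto u l (𝓝 a) := by
  have ha : a ∈ s := mem_of_mem_nhds hs
  have hFu_le : ∀ᶠ i in l, F (u i) ≤ F a := by
    filter_upwards [hε_nonneg, hu, heq] with i hεi hui hi
    linarith [mul_nonneg hεi (hG_nonneg _ hui)]
  have hle_Fu : ∀ᶠ i in l, F a - ε i * G a ≤ F (u i) := by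
    filter_upwards [hε_nonneg, hu, heq, hFu_le] with i hεi hui hi hle
    have hua : u i ≤ a := (hF.le_iff_le hui ha).1 hle
    linarith [mul_le_mul_of_nonneg_left (hG hui ha hua) hεi]
  have hlim : Tendsto (fun i => F a - ε i * G a) l (𝓝 (F a)) := by
    simpa using (hε.mul_const (G a)).const_sub (F a)
  exact tendsto_of_strictMonoOn_of_tendsto_comp hF hs hu
    (tendsto_of_tendsto_of_tendsto_of_le_of_le' hlim tendsto_const_nhds hle_Fu hFu_le)

end MonotoneEquations

section Kummer

lemma poch_pos {a : ℝ} (ha : 0 < a) (s : ℕ) : 0 < poch a s :=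
  Finset.prod_pos fun i _ => by positivity

lemma poch_succ (a : ℝ) (s : ℕ) : poch a (s + 1) = poch a s * (a + s) :=
  Finset.prod_range_succ _ s

lemma kummerM_coeff_pos {a b : ℝ} (ha : 0 < a) (hb : 0 < b) (s : ℕ) :
    0 < poch a s / (poch b s * s.factorial) := by
  have := poch_pos ha s
  have := poch_pos hb s
  positivity

lemma summable_kummerM_term (a b z : ℝ) :
    Summable fun s : ℕ => poch a s / (poch b s * s.factorial) * z ^ s := by
  have hratio : Tendsto (fun s : ℕ => (a + s) / (b + s) * (1 / ((s : ℝ) + 1)) * z) atTop (𝓝 0) := by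
    have h := tendsto_add_mul_div_add_mul_atTop_nhds a b 1 one_ne_zero
    simpa using (h.mul tendsto_one_div_add_atTop_nhds_zero_nat).mul_const z
  refine summable_of_ratio_norm_eventually_le one_half_lt_one ?_
  filter_upwards [hratio.norm.eventually_lt_const (by norm_num : ‖(0 : ℝ)‖ < 1 / 2)] with s hs
  have hsucc : poch a (s + 1) / (poch b (s + 1) * (s + 1).factorial) * z ^ (s + 1)
      = (a + s) / (b + s) * (1 / ((s : ℝ) + 1)) * z
        * (poch a s / (poch b s * s.factorial) * z ^ s) := by
    rw [poch_succ, poch_succ, Nat.factorial_succ, pow_succ]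
    push_cast
    simp only [div_eq_mul_inv, mul_inv]
    ring
  rw [hsucc, norm_mul]
  gcongr

lemma kummerM_pos {a b z : ℝ} (ha : 0 < a) (hb : 0 < b) (hz : 0 ≤ z) : 0 < kummerM a b z :=
  (summable_kummerM_term a b z).tsum_pos
    (fun s => mul_nonneg (kummerM_coeff_pos ha hb s).le (pow_nonneg hz s)) 0 (by simp [poch])

lemma monotoneOn_kummerM {a b : ℝ} (ha : 0 < a) (hb : 0 < b) :
    MonotoneOn (kummerM a b) (Ici 0) := by
  intro z hz w _ hzw
  refine (summable_kummerM_term a b z).tsum_le_tsum (fun s => ?_) (summable_kummerM_term a b w)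
  exact mul_le_mul_of_nonneg_left (pow_le_pow_left₀ hz hzw s) (kummerM_coeff_pos ha hb s).le

lemma monotoneOn_kummerM_sq {a b : ℝ} (ha : 0 < a) (hb : 0 < b) :
    MonotoneOn (fun x => kummerM a b (x ^ 2)) (Ici 0) := fun x hx y _ hxy =>
  monotoneOn_kummerM ha hb (sq_nonneg x) (sq_nonneg y) (pow_le_pow_left₀ hx hxy 2)

end Kummer

section Tricomi

lemma exists_one_add_rpow_le_mul_exp (c : ℝ) {k : ℝ} (hk : 0 < k) :
    ∃ C, ∀ t, 0 ≤ t → (1 + t) ^ c ≤ C * Real.exp (k * t) := by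
  set m := 1 + |c| / k with hm
  have hm_one : 1 ≤ m := le_add_of_nonneg_right (by positivity)
  have hcm : |c| / m ≤ k := by
    rw [div_le_iff₀ (by positivity), hm, mul_add, mul_div_cancel₀ _ hk.ne']
    linarith
  refine ⟨m ^ |c|, fun t ht => ?_⟩
  have hlin : 1 + t ≤ m * Real.exp (t / m) := calc
    1 + t ≤ m * (t / m + 1) := by field_simp; linarith
    _ ≤ m * Real.exp (t / m) := by gcongr; exact Real.add_one_le_exp _
  calc (1 + t) ^ c ≤ (1 + t) ^ |c| :=
        Real.rpow_le_rpow_of_exponent_le (by linarith) (le_abs_self c)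
    _ ≤ (m * Real.exp (t / m)) ^ |c| := by gcongr
    _ = m ^ |c| * Real.exp (|c| / m * t) := by
        rw [Real.mul_rpow (by positivity) (by positivity), ← Real.exp_mul]
        ring_nf
    _ ≤ m ^ |c| * Real.exp (k * t) := by gcongr

lemma integrableOn_tricomiU_integrand {a z : ℝ} (b : ℝ) (ha : 0 < a) (hz : 0 < z) :
    IntegrableOn (fun t : ℝ => Real.exp (-z * t) * t ^ (a - 1) * (1 + t) ^ (b - a - 1))
      (Ioi 0) := by
  obtain ⟨C, hC⟩ := exists_one_add_rpow_le_mul_exp (b - a - 1) (half_pos hz)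
  have hgamma : IntegrableOn (fun t : ℝ => t ^ (a - 1) * Real.exp (-(z / 2) * t ^ (1 : ℝ)))
      (Ioi 0) :=
    integrableOn_rpow_mul_exp_neg_mul_rpow (by linarith) one_pos (half_pos hz)
  refine (hgamma.const_mul C).mono' (by fun_prop) ?_
  filter_upwards [ae_restrict_mem measurableSet_Ioi] with t (ht : 0 < t)
  rw [Real.norm_of_nonneg (by positivity), Real.rpow_one]
  calc Real.exp (-z * t) * t ^ (a - 1) * (1 + t) ^ (b - a - 1)
      ≤ Real.exp (-z * t) * t ^ (a - 1) * (C * Real.exp (z / 2 * t)) := by gcongr; exact hC t ht.le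
    _ = C * (t ^ (a - 1) * (Real.exp (-z * t) * Real.exp (z / 2 * t))) := by ring
    _ = C * (t ^ (a - 1) * Real.exp (-(z / 2) * t)) := by rw [← Real.exp_add]; ring_nf

lemma antitoneOn_tricomiU {a : ℝ} (b : ℝ) (ha : 0 < a) : AntitoneOn (tricomiU a b) (Ioi 0) := by
  intro z hz w hw hzw
  refine mul_le_mul_of_nonneg_left ?_ (one_div_pos.2 (Real.Gamma_pos_of_pos ha)).le
  refine setIntegral_mono_on (integrableOn_tricomiU_integrand b ha hw)
    (integrableOn_tricomiU_integrand b ha hz) measurableSet_Ioi fun t (ht : 0 < t) => ?_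
  gcongr

lemma tricomiU_pos {a z : ℝ} (b : ℝ) (ha : 0 < a) (hz : 0 < z) : 0 < tricomiU a b z := by
  have hpos : ∀ t ∈ Ioi (0 : ℝ), 0 < Real.exp (-z * t) * t ^ (a - 1) * (1 + t) ^ (b - a - 1) :=
    fun t (ht : 0 < t) => by positivity
  refine mul_pos (one_div_pos.2 (Real.Gamma_pos_of_pos ha)) ?_
  rw [setIntegral_pos_iff_support_of_nonneg_ae _ (integrableOn_tricomiU_integrand b ha hz)]
  · have hsub : Ioi 0 ⊆
        Function.support fun t : ℝ => Real.exp (-z * t) * t ^ (a - 1) * (1 + t) ^ (b - a - 1) :=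
      fun t ht => (hpos t ht).ne'
    rw [inter_eq_right.2 hsub, Real.volume_Ioi]
    exact ENNReal.zero_lt_top
  · filter_upwards [ae_restrict_mem measurableSet_Ioi] with t ht using (hpos t ht).le

end Tricomi

section FreeBoundary

/-- The function `x ↦ x^{α+1} + A f₁(x)`, where `f₁(x) = 1 / U(α/2 + 1/2, 1/2, x²ω²)`. It collects
the terms common to equation (24) and the limit equation. -/
noncomputable def interfaceFlux (α A ω x : ℝ) : ℝ :=
  x ^ (α + 1) + A * (1 / tricomiU (α / 2 + 1 / 2) (1 / 2) (x ^ 2 * ω ^ 2))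

variable {α A ω : ℝ}

lemma interfaceFlux_pos (hα : -1 < α) (hA : 0 ≤ A) (hω : 0 < ω) {x : ℝ} (hx : 0 < x) :
    0 < interfaceFlux α A ω x := by
  have hU : 0 < tricomiU (α / 2 + 1 / 2) (1 / 2) (x ^ 2 * ω ^ 2) :=
    tricomiU_pos _ (by linarith) (by positivity)
  unfold interfaceFlux
  positivity

lemma strictMonoOn_interfaceFlux (hα : -1 < α) (hA : 0 ≤ A) (hω : 0 < ω) :
    StrictMonoOn (interfaceFlux α A ω) (Ioi 0) := by
  intro x (hx : 0 < x) y (hy : 0 < y) hxy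
  have ha : 0 < α / 2 + 1 / 2 := by linarith
  have hU : tricomiU (α / 2 + 1 / 2) (1 / 2) (y ^ 2 * ω ^ 2)
      ≤ tricomiU (α / 2 + 1 / 2) (1 / 2) (x ^ 2 * ω ^ 2) :=
    antitoneOn_tricomiU _ ha (mem_Ioi.2 (by positivity)) (mem_Ioi.2 (by positivity)) (by gcongr)
  exact add_lt_add_of_lt_of_le (Real.rpow_lt_rpow hx.le hxy (by linarith))
    (mul_le_mul_of_nonneg_left
      (one_div_le_one_div_of_le (tricomiU_pos _ ha (by positivity)) hU) hA)

lemma monotoneOn_interfaceFlux_mul_kummerM (hα : -1 < α) (hA : 0 ≤ A) (hω : 0 < ω) {a b : ℝ}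
    (ha : 0 < a) (hb : 0 < b) :
    MonotoneOn (fun x => interfaceFlux α A ω x * kummerM a b (x ^ 2)) (Ioi 0) :=
  (strictMonoOn_interfaceFlux hα hA hω).monotoneOn.mul
    ((monotoneOn_kummerM_sq ha hb).mono Ioi_subset_Ici_self)
    (fun _ hx => (interfaceFlux_pos hα hA hω hx).le)
    (fun x _ => (kummerM_pos ha hb (sq_nonneg x)).le)

lemma strictMonoOn_interfaceFlux_mul_kummerM (hα : -1 < α) (hA : 0 ≤ A) (hω : 0 < ω) {a b : ℝ}
    (ha : 0 < a) (hb : 0 < b) :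
    StrictMonoOn (fun x => interfaceFlux α A ω x * (x * kummerM a b (x ^ 2))) (Ioi 0) := by
  intro x (hx : 0 < x) y (hy : 0 < y) hxy
  have hMx := kummerM_pos ha hb (sq_nonneg x)
  have hM : kummerM a b (x ^ 2) ≤ kummerM a b (y ^ 2) :=
    monotoneOn_kummerM_sq ha hb hx.le hy.le hxy.le
  exact mul_lt_mul (strictMonoOn_interfaceFlux hα hA hω hx hy hxy)
    (mul_le_mul hxy.le hM hMx.le hy.le) (mul_pos hx hMx) (interfaceFlux_pos hα hA hω hy).le

lemma mul_add_inv_mul_mul_eq_div {g p q C L h : ℝ} (hLh : L * h ≠ 0) (hpq : p + L * h * q ≠ 0)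
    (hg : g = h * C / (p + L * h * q)) : g * q + (L * h)⁻¹ * (g * p) = C / L := by
  have hL : L ≠ 0 := left_ne_zero_of_mul hLh
  have hh : h ≠ 0 := right_ne_zero_of_mul hLh
  rw [eq_div_iff hpq] at hg
  field_simp
  linear_combination hg

lemma tendsto_of_interfaceFlux_eq (hα : -1 < α) (hA : 0 ≤ A) (hω : 0 < ω) {C L : ℝ} (hL : 0 < L)
    {ν : ℝ → ℝ} (hν_pos : ∀ᶠ h in atTop, 0 < ν h)
    (hν : ∀ᶠ h in atTop, interfaceFlux α A ω (ν h) =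
      h * C / (kummerM (α / 2 + 1 / 2) (1 / 2) (ν h ^ 2)
        + L * h * (ν h * kummerM (α / 2 + 1) (3 / 2) (ν h ^ 2))))
    {n : ℝ} (hn_pos : 0 < n)
    (hn : interfaceFlux α A ω n = C / L / (n * kummerM (α / 2 + 1) (3 / 2) (n ^ 2))) :
    Tendsto ν atTop (𝓝 n) := by
  have ha₁ : 0 < α / 2 + 1 / 2 := by linarith
  have ha₂ : 0 < α / 2 + 1 := by linarith
  have hM₁ (x : ℝ) : 0 < kummerM (α / 2 + 1 / 2) (1 / 2) (x ^ 2) :=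
    kummerM_pos ha₁ one_half_pos (sq_nonneg x)
  have hM₂ (x : ℝ) : 0 < kummerM (α / 2 + 1) (3 / 2) (x ^ 2) :=
    kummerM_pos ha₂ (by norm_num) (sq_nonneg x)
  refine tendsto_of_add_mul_eq (ε := fun h => (L * h)⁻¹)
    (strictMonoOn_interfaceFlux_mul_kummerM hα hA hω ha₂ (by norm_num : (0 : ℝ) < 3 / 2))
    (monotoneOn_interfaceFlux_mul_kummerM hα hA hω ha₁ (one_half_pos : (0 : ℝ) < 1 / 2))
    (fun x hx => (mul_pos (interfaceFlux_pos hα hA hω hx) (hM₁ x)).le)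
    (Ioi_mem_nhds hn_pos) ?_ ?_ hν_pos ?_
  · filter_upwards [eventually_gt_atTop 0] with h hh
    positivity
  · exact tendsto_inv_atTop_zero.comp (tendsto_id.const_mul_atTop hL)
  · filter_upwards [hν_pos, hν, eventually_gt_atTop 0] with h hνh heq hh
    have hM₁ν := hM₁ (ν h)
    have hM₂ν := hM₂ (ν h)
    rw [(eq_div_iff (mul_pos hn_pos (hM₂ n)).ne').1 hn]
    exact mul_add_inv_mul_mul_eq_div (by positivity) (by positivity) heq

lemma robin_coeff_div_eq {α dl : ℝ} (hdl : 0 < dl) (kl γ Tinf : ℝ) :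
    Tinf / (γ * (2 : ℝ) ^ α * dl ^ ((α + 1) / 2)) / (2 * √dl / kl)
      = kl * Tinf / ((2 : ℝ) ^ (α + 1) * dl ^ (α / 2 + 1) * γ) := by
  have hpow_two : (2 : ℝ) ^ (α + 1) = 2 ^ α * 2 := by
    rw [Real.rpow_add two_pos, Real.rpow_one]
  have hpow_dl : dl ^ (α / 2 + 1) = dl ^ ((α + 1) / 2) * √dl := by
    rw [Real.sqrt_eq_rpow, ← Real.rpow_add hdl]
    ring_nf
  rw [hpow_two, hpow_dl]
  field_simp

end FreeBoundary

theorem statement_16_general {α kl ks dl ds γ Ti Tinf : ℝ}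
    (hα : -1 < α) (hkl : 0 < kl) (hks : 0 ≤ ks) (hdl : 0 < dl) (hds : 0 < ds)
    (hγ : 0 < γ) (hTi : 0 ≤ Ti) {ω : ℝ} (hω : ω = √(dl / ds)) {ν : ℝ → ℝ}
    (hν : ∀ᶠ h₀ in atTop,
      0 < ν h₀ ∧
      -(ks * Ti * ds ^ ((α - 1) / 2) / (γ * dl ^ ((α + 1) / 2))) *
          (1 / tricomiU (α / 2 + 1 / 2) (1 / 2) ((ν h₀) ^ 2 * ω ^ 2))
        + h₀ * Tinf / (γ * (2 : ℝ) ^ α * dl ^ ((α + 1) / 2)) *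
          (1 / (kummerM (α / 2 + 1 / 2) (1 / 2) ((ν h₀) ^ 2)
                + 2 * √dl * h₀ / kl * (ν h₀) * kummerM (α / 2 + 1) (3 / 2) ((ν h₀) ^ 2)))
        = (ν h₀) ^ (α + 1))
    {νinf : ℝ} (hνinf_pos : 0 < νinf)
    (hνinf : kl * Tinf / ((2 : ℝ) ^ (α + 1) * dl ^ (α / 2 + 1) * γ) *
          (1 / (νinf * kummerM (α / 2 + 1) (3 / 2) (νinf ^ 2)))
        - ks * Ti * ds ^ ((α - 1) / 2) / (γ * dl ^ ((α + 1) / 2)) *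
          (1 / tricomiU (α / 2 + 1 / 2) (1 / 2) (νinf ^ 2 * ω ^ 2))
        = νinf ^ (α + 1)) :
    Tendsto ν atTop (𝓝 νinf) := by
  have hω_pos : 0 < ω := hω ▸ Real.sqrt_pos.2 (div_pos hdl hds)
  refine tendsto_of_interfaceFlux_eq (C := Tinf / (γ * (2 : ℝ) ^ α * dl ^ ((α + 1) / 2)))
    (L := 2 * √dl / kl) (A := ks * Ti * ds ^ ((α - 1) / 2) / (γ * dl ^ ((α + 1) / 2)))
    hα (by positivity) hω_pos (by positivity) (hν.mono fun _ h => h.1) ?_ hνinf_pos ?_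
  · filter_upwards [hν] with h₀ ⟨_, heq⟩
    rw [interfaceFlux, ← heq]
    ring
  · rw [interfaceFlux, ← hνinf, robin_coeff_div_eq hdl]
    ring

/-- the coefficient `ν(h₀)` characterizing the free boundary (the unique
positive solution of equation (24)) converges, as the heat transfer coefficient
`h₀ → +∞`, to the unique positive solution `ν_∞` of the limit equation corresponding
to a prescribed temperature at the fixed face. -/
theorem statement_16 (α kl ks dl ds γ Ti Tinf : ℝ)
    (hα : 0 < α) (hkl : 0 < kl) (hks : 0 < ks) (hdl : 0 < dl) (hds : 0 < ds)
    (hγ : 0 < γ) (hTi : 0 < Ti) (hTinf : 0 < Tinf)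
    (ω : ℝ) (hω : ω = Real.sqrt (dl / ds))
    (h₀star : ℝ)
    (hstar : h₀star = (2:ℝ) ^ α * Real.Gamma (α / 2 + 1) * ks * Ti * ds ^ ((α - 1) / 2)
      / (Tinf * Real.sqrt Real.pi))
    (ν : ℝ → ℝ)
    (hν : ∀ h₀ : ℝ, h₀star < h₀ →
      0 < ν h₀ ∧
      -(ks * Ti * ds ^ ((α - 1) / 2) / (γ * dl ^ ((α + 1) / 2))) *
          (1 / tricomiU (α / 2 + 1 / 2) (1 / 2) ((ν h₀) ^ 2 * ω ^ 2))
        + h₀ * Tinf / (γ * (2:ℝ) ^ α * dl ^ ((α + 1) / 2)) *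
          (1 / (kummerM (α / 2 + 1 / 2) (1 / 2) ((ν h₀) ^ 2)
                + 2 * Real.sqrt dl * h₀ / kl * (ν h₀) * kummerM (α / 2 + 1) (3 / 2) ((ν h₀) ^ 2)))
        = (ν h₀) ^ (α + 1))
    (νinf : ℝ)
    (hνinf : 0 < νinf ∧
      kl * Tinf / ((2:ℝ) ^ (α + 1) * dl ^ (α / 2 + 1) * γ) *
          (1 / (νinf * kummerM (α / 2 + 1) (3 / 2) (νinf ^ 2)))
        - ks * Ti * ds ^ ((α - 1) / 2) / (γ * dl ^ ((α + 1) / 2)) *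
          (1 / tricomiU (α / 2 + 1 / 2) (1 / 2) (νinf ^ 2 * ω ^ 2))
        = νinf ^ (α + 1)) :
    Filter.Tendsto ν Filter.atTop (nhds νinf) :=
  statement_16_general (by linarith) hkl hks.le hdl hds hγ hTi.le hω
    ((Filter.eventually_gt_atTop h₀star).mono hν) hνinf.1 hνinf.2
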